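/- Fix integers n, m with 1 ≤ m ≤ (n+1)/2, let P := Y_{m,n−m+1} with I-coloring κ((i,j)) := j − i + m, and let Y be an order filter of P and k ∈ {1,…,n}. Then (k ∈ 𝓘(Y) and k+1 ∈ 𝓘(Y)) or (k ∉ 𝓘(Y) and k+1 ∉ 𝓘(Y)) if and only if S_k(Y) = Y. -/

import Mathlib

/-- `F` is an order filter of the poset `α`: upward closed subset. -/
def IsOrderFilter {α : Type*} [PartialOrder α] (F : Set α) : Prop :=
  ∀ ⦃x y : α⦄, x ∈ F → x ≤ y → y ∈ F

/-- `A_c(F)`: the union of all order filters `F'` with `F' \ F ⊆ κ⁻¹({c})`. -/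
def Aop {α C : Type*} [PartialOrder α] (κ : α → C) (c : C) (F : Set α) : Set α :=
  ⋃₀ {F' : Set α | IsOrderFilter F' ∧ F' \ F ⊆ κ ⁻¹' {c}}

/-- `R_c(F)`: the intersection of all order filters `F'` with `F \ F' ⊆ κ⁻¹({c})`. -/
def Rop {α C : Type*} [PartialOrder α] (κ : α → C) (c : C) (F : Set α) : Set α :=
  ⋂₀ {F' : Set α | IsOrderFilter F' ∧ F \ F' ⊆ κ ⁻¹' {c}}

open Classical in
/-- `S_c(F) := (A_c(F) \ F) ∪ R_c(F)` if this is an order filter, and `F` otherwise. -/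
noncomputable def Sop {α C : Type*} [PartialOrder α] (κ : α → C) (c : C) (F : Set α) : Set α :=
  if IsOrderFilter ((Aop κ c F \ F) ∪ Rop κ c F) then (Aop κ c F \ F) ∪ Rop κ c F else F

/-- The rectangular Young diagram poset `Y_{m,N}` (cells `(i,j)`, `1 ≤ i ≤ m`,
`1 ≤ j ≤ N`, with `(i₁,j₁) ≤ (i₂,j₂)` iff `i₁ ≥ i₂` and `j₁ ≥ j₂`), realized as the
product of two dual finite chains. -/
abbrev YD (m N : ℕ) := (Fin m)ᵒᵈ × (Fin N)ᵒᵈ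

/-- The `I`-coloring of `Y_{m, n−m+1}` for type `A_n`: `κ((i,j)) = j − i + m`
(in 1-indexed coordinates), with values in `{1,…,n}`. -/
def ykappa (m N : ℕ) (x : YD m N) : ℤ :=
  ((OrderDual.ofDual x.2 : Fin N) : ℤ) - ((OrderDual.ofDual x.1 : Fin m) : ℤ) + m

/-- The length `𝐤_i` of row `i` of a subset `Y` of `Y_{m,N}`:
the number of cells of `Y` in row `i`. -/
noncomputable def rowLen (m N : ℕ) (Y : Set (YD m N)) (i : Fin m) : ℕ :=
  Set.ncard {j : Fin N | (OrderDual.toDual i, OrderDual.toDual j) ∈ Y}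

/-- `𝓘(Y) := {𝐤_i + m + 1 − i : 1 ≤ i ≤ m} ⊆ {1,…,n+1}` (here the row index `i`
is 0-indexed, so the element for row `i` is `𝐤_i + m − i`). -/
def ISet (m N : ℕ) (Y : Set (YD m N)) : Set ℤ :=
  {z : ℤ | ∃ i : Fin m, z = (rowLen m N Y i : ℤ) + m - (i : ℤ)}

/-!
When the coloring separates the two ends of every covering relation, `A_c` adds to a filter `F`
exactly the maximal elements of its complement that have color `c`, and `R_c` removes exactly the
minimal elements of `F` that have color `c`. If `x` is of the first kind and `y` of the second, then
`x < y` would force `x ⋖ y`, contradicting that both have color `c`; hence the two moves do not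
interfere, the set defining `S_c F` is always a filter, and `S_c F = F` exactly when `F` admits no
move of color `c`.

In a rectangle, row `i` (counted from 0) of `Y` contributes `kᵢ + m - i` to `𝓘(Y)`. This value is
strictly decreasing in `i`, so two consecutive values come from adjacent rows of equal length. A
cell of color `k` can be added at the end of row `i` precisely when `k = kᵢ + m - i` and the row
above is not of the same length, that is, when `k ∈ 𝓘(Y)` and `k + 1 ∉ 𝓘(Y)`; dually, one can be
removed precisely when `k + 1 ∈ 𝓘(Y)` and `k ∉ 𝓘(Y)`.
-/

section ProperColoring

variable {α C : Type*} [PartialOrder α] {κ : α → C} {c : C} {F : Set α} {x : α}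

/-- A coloring of a poset is proper if it is a proper coloring of the Hasse diagram, that is, if no
element has the color of an element it covers. -/
def IsProperColoring (κ : α → C) : Prop :=
  ∀ ⦃x y : α⦄, x ⋖ y → κ x ≠ κ y

theorem IsOrderFilter.insert (hF : IsOrderFilter F) (hx : Maximal (· ∉ F) x) :
    IsOrderFilter (insert x F) := by
  rintro a b (rfl | ha) hab
  · by_cases hb : b ∈ F
    · exact Or.inr hb
    · exact Or.inl (hx.eq_of_ge hb hab)
  · exact Or.inr (hF ha hab)

theorem IsOrderFilter.sdiff_singleton (hF : IsOrderFilter F) (hx : Minimal (· ∈ F) x) :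
    IsOrderFilter (F \ {x}) := by
  rintro a b ⟨ha, hax⟩ hab
  refine ⟨hF ha hab, ?_⟩
  rintro rfl
  exact hax (hx.eq_of_le ha hab)

theorem isOrderFilter_Rop (κ : α → C) (c : C) (F : Set α) : IsOrderFilter (Rop κ c F) :=
  fun _ _ hx hxy G hG ↦ hG.1 (hx G hG) hxy

theorem IsProperColoring.mem_Aop_iff [IsStronglyAtomic α] (hκ : IsProperColoring κ)
    (hF : IsOrderFilter F) : x ∈ Aop κ c F ↔ x ∈ F ∨ Maximal (· ∉ F) x ∧ κ x = c := by
  constructor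
  · rintro ⟨G, ⟨hG, hGF⟩, hxG⟩
    refine or_iff_not_imp_left.2 fun hxF ↦ ?_
    have hxc : κ x = c := hGF ⟨hxG, hxF⟩
    refine ⟨maximal_iff_forall_gt.2 ⟨hxF, fun y hxy hyF ↦ ?_⟩, hxc⟩
    obtain ⟨z, hxz, hzy⟩ := exists_covBy_le_of_lt hxy
    have hzF : z ∉ F := fun hzF ↦ hyF (hF hzF hzy)
    have hzc : κ z = c := hGF ⟨hG hxG hxz.le, hzF⟩
    exact hκ hxz (hxc.trans hzc.symm)
  · rintro (hx | ⟨hx, rfl⟩)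
    · exact ⟨F, ⟨hF, by simp⟩, hx⟩
    · refine ⟨insert x F, ⟨hF.insert hx, ?_⟩, Set.mem_insert x F⟩
      rintro y ⟨rfl | hyF, hyF'⟩
      · rfl
      · exact absurd hyF hyF'

theorem IsProperColoring.mem_Rop_iff [IsStronglyCoatomic α] (hκ : IsProperColoring κ)
    (hF : IsOrderFilter F) : x ∈ Rop κ c F ↔ x ∈ F ∧ ¬(Minimal (· ∈ F) x ∧ κ x = c) := by
  constructor
  · refine fun hx ↦ ⟨hx F ⟨hF, by simp⟩, ?_⟩
    rintro ⟨hmin, rfl⟩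
    refine (hx (F \ {x}) ⟨hF.sdiff_singleton hmin, ?_⟩).2 rfl
    rw [Set.sdiff_sdiff_right_self]
    rintro y ⟨-, rfl⟩
    rfl
  · rintro ⟨hxF, hx⟩ G ⟨hG, hFG⟩
    by_contra hxG
    have hxc : κ x = c := hFG ⟨hxF, hxG⟩
    refine hx ⟨minimal_iff_forall_lt.2 ⟨hxF, fun y hyx hyF ↦ ?_⟩, hxc⟩
    obtain ⟨z, hyz, hzx⟩ := exists_le_covBy_of_lt hyx
    have hzG : z ∉ G := fun hzG ↦ hxG (hG hzG hzx.le)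
    have hzc : κ z = c := hFG ⟨hF hyF hyz, hzG⟩
    exact hκ hzx (hzc.trans hxc.symm)

theorem covBy_of_maximal_notMem_of_minimal_mem {y : α} (hx : Maximal (· ∉ F) x)
    (hy : Minimal (· ∈ F) y) (hxy : x < y) : x ⋖ y := by
  refine ⟨hxy, fun z hxz hzy ↦ ?_⟩
  by_cases hz : z ∈ F
  · exact hy.not_prop_of_lt hzy hz
  · exact hx.not_prop_of_gt hxz hz

variable [IsStronglyAtomic α] [IsStronglyCoatomic α]

theorem IsProperColoring.isOrderFilter_Aop_sdiff_union_Rop (hκ : IsProperColoring κ)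
    (hF : IsOrderFilter F) : IsOrderFilter ((Aop κ c F \ F) ∪ Rop κ c F) := by
  rintro x y (⟨hxA, hxF⟩ | hxR) hxy
  · obtain ⟨hmax, hxc⟩ := ((hκ.mem_Aop_iff hF).1 hxA).resolve_left hxF
    rcases hxy.eq_or_lt with rfl | hlt
    · exact Or.inl ⟨hxA, hxF⟩
    · have hyF : y ∈ F := not_not.1 (hmax.not_prop_of_gt hlt)
      refine Or.inr ((hκ.mem_Rop_iff hF).2 ⟨hyF, fun ⟨hmin, hyc⟩ ↦ ?_⟩)
      exact hκ (covBy_of_maximal_notMem_of_minimal_mem hmax hmin hlt) (hxc.trans hyc.symm)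
  · exact Or.inr (isOrderFilter_Rop κ c F hxR hxy)

theorem IsProperColoring.mem_Sop_iff (hκ : IsProperColoring κ) (hF : IsOrderFilter F) :
    x ∈ Sop κ c F ↔
      Maximal (· ∉ F) x ∧ κ x = c ∨ x ∈ F ∧ ¬(Minimal (· ∈ F) x ∧ κ x = c) := by
  rw [Sop, if_pos (hκ.isOrderFilter_Aop_sdiff_union_Rop hF), Set.mem_union, Set.mem_sdiff,
    hκ.mem_Aop_iff hF, hκ.mem_Rop_iff hF]
  have hx : Maximal (· ∉ F) x → x ∉ F := Maximal.prop
  tauto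

theorem IsProperColoring.Sop_eq_self_iff (hκ : IsProperColoring κ) (hF : IsOrderFilter F) :
    Sop κ c F = F ↔
      (¬∃ x, Maximal (· ∉ F) x ∧ κ x = c) ∧ ¬∃ x, Minimal (· ∈ F) x ∧ κ x = c := by
  rw [Set.ext_iff, not_exists, not_exists, ← forall_and]
  refine forall_congr' fun x ↦ ?_
  have hmax : Maximal (· ∉ F) x → x ∉ F := Maximal.prop
  have hmin : Minimal (· ∈ F) x → x ∈ F := Minimal.prop
  rw [hκ.mem_Sop_iff hF]
  tauto

end ProperColoring

theorem mem_iff_lt_ncard_of_isLowerSet {N : ℕ} {s : Set (Fin N)} (hs : IsLowerSet s) (j : Fin N) :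
    j ∈ s ↔ (j : ℕ) < s.ncard := by
  rcases hs.eq_univ_or_Iio with rfl | ⟨a, rfl⟩
  · simp [Set.ncard_univ]
  · rw [← Finset.coe_Iio, Set.ncard_coe_finset, Fin.card_Iio, Finset.coe_Iio, Set.mem_Iio,
      Fin.lt_def]

section YoungDiagram

open OrderDual

variable {m N : ℕ} {Y : Set (YD m N)}

theorem isProperColoring_ykappa (m N : ℕ) : IsProperColoring (ykappa m N) := by
  rintro ⟨i, j⟩ ⟨i', j'⟩ h hκ
  have hκ' : ((ofDual j : Fin N) : ℤ) - (ofDual i : Fin m) =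
      (ofDual j' : Fin N) - (ofDual i' : Fin m) := add_right_cancel hκ
  rcases Prod.mk_covBy_mk_iff.1 h with ⟨hi, rfl⟩ | ⟨hj, rfl⟩
  · exact hi.ne (ofDual.injective (Fin.ext (by omega)))
  · exact hj.ne (ofDual.injective (Fin.ext (by omega)))

theorem rowLen_le (Y : Set (YD m N)) (i : Fin m) : rowLen m N Y i ≤ N :=
  (Set.ncard_le_card _).trans_eq (Nat.card_fin N)

theorem IsOrderFilter.mem_iff_lt_rowLen (hY : IsOrderFilter Y) (i : Fin m) (j : Fin N) :
    (toDual i, toDual j) ∈ Y ↔ (j : ℕ) < rowLen m N Y i :=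
  mem_iff_lt_ncard_of_isLowerSet (s := {j | (toDual i, toDual j) ∈ Y})
    (fun _ _ hba ha ↦ hY ha ⟨le_rfl, hba⟩) j

theorem IsOrderFilter.antitone_rowLen (hY : IsOrderFilter Y) : Antitone (rowLen m N Y) :=
  fun _ _ hii' ↦ Set.ncard_le_ncard fun _ hj ↦ hY hj ⟨hii', le_rfl⟩

theorem IsOrderFilter.maximal_notMem_iff (hY : IsOrderFilter Y) (i : Fin m) (j : Fin N) :
    Maximal (· ∉ Y) (toDual i, toDual j) ↔
      (j : ℕ) = rowLen m N Y i ∧ ∀ i' < i, rowLen m N Y i' ≠ rowLen m N Y i := by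
  constructor
  · intro h
    have hle : rowLen m N Y i ≤ j := not_lt.1 (mt (hY.mem_iff_lt_rowLen i j).2 h.prop)
    refine ⟨hle.antisymm' ?_, fun i' hi' heq ↦ ?_⟩
    · let j' : Fin N := ⟨rowLen m N Y i, hle.trans_lt j.2⟩
      have hj' : (toDual i, toDual j') ∉ Y := by simp [hY.mem_iff_lt_rowLen, j']
      exact (h.le_of_ge hj' ⟨le_rfl, hle⟩).2
    · have hi'Y : (toDual i', toDual j) ∉ Y := by rwa [hY.mem_iff_lt_rowLen, heq, not_lt]
      exact (h.le_of_ge hi'Y ⟨hi'.le, le_rfl⟩).1.not_gt hi'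
  · rintro ⟨hj, hne⟩
    refine ⟨by simp [hY.mem_iff_lt_rowLen, hj], fun ⟨i', j'⟩ hY' ⟨hi', hj'⟩ ↦ ?_⟩
    induction i' using OrderDual.rec with | _ i'
    induction j' using OrderDual.rec with | _ j'
    have hi'i : i' ≤ i := hi'
    have hj'j : (j' : ℕ) ≤ j := hj'
    have hlen : rowLen m N Y i' ≤ j' := not_lt.1 (mt (hY.mem_iff_lt_rowLen i' j').2 hY')
    have hanti : rowLen m N Y i ≤ rowLen m N Y i' := hY.antitone_rowLen hi'i
    have hii' : i ≤ i' := not_lt.1 fun hlt ↦ hne i' hlt (by omega)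
    exact ⟨hii', Fin.le_def.2 (show (j : ℕ) ≤ j' by omega)⟩

theorem IsOrderFilter.minimal_mem_iff (hY : IsOrderFilter Y) (i : Fin m) (j : Fin N) :
    Minimal (· ∈ Y) (toDual i, toDual j) ↔
      (j : ℕ) + 1 = rowLen m N Y i ∧ ∀ i' > i, rowLen m N Y i' ≠ rowLen m N Y i := by
  constructor
  · intro h
    have hlt : j < rowLen m N Y i := (hY.mem_iff_lt_rowLen i j).1 h.prop
    refine ⟨le_antisymm hlt ?_, fun i' hi' heq ↦ ?_⟩
    · have hN := rowLen_le Y i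
      let j' : Fin N := ⟨rowLen m N Y i - 1, by omega⟩
      have hj' : (toDual i, toDual j') ∈ Y := by
        rw [hY.mem_iff_lt_rowLen]
        exact Nat.sub_one_lt_of_lt hlt
      have hle : rowLen m N Y i - 1 ≤ j :=
        (h.le_of_le hj' ⟨le_rfl, Nat.le_sub_one_of_lt hlt⟩).2
      exact Nat.sub_le_iff_le_add.1 hle
    · have hi'Y : (toDual i', toDual j) ∈ Y := by rwa [hY.mem_iff_lt_rowLen, heq]
      exact (h.le_of_le hi'Y ⟨hi'.le, le_rfl⟩).1.not_gt hi'
  · rintro ⟨hj, hne⟩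
    refine ⟨(hY.mem_iff_lt_rowLen i j).2 (by omega), fun ⟨i', j'⟩ hY' ⟨hi', hj'⟩ ↦ ?_⟩
    induction i' using OrderDual.rec with | _ i'
    induction j' using OrderDual.rec with | _ j'
    have hii' : i ≤ i' := hi'
    have hjj' : (j : ℕ) ≤ j' := hj'
    have hlen : j' < rowLen m N Y i' := (hY.mem_iff_lt_rowLen i' j').1 hY'
    have hanti : rowLen m N Y i' ≤ rowLen m N Y i := hY.antitone_rowLen hii'
    have hi'i : i' ≤ i := not_lt.1 fun hlt ↦ hne i' hlt (by omega)
    exact ⟨hi'i, Fin.le_def.2 (show (j' : ℕ) ≤ j by omega)⟩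

theorem IsOrderFilter.add_one_mem_ISet_iff (hY : IsOrderFilter Y) (i : Fin m) :
    (rowLen m N Y i : ℤ) + m - i + 1 ∈ ISet m N Y ↔ ∃ i' < i, rowLen m N Y i' = rowLen m N Y i := by
  constructor
  · rintro ⟨i', hi'⟩
    have hlt : i' < i := lt_of_not_ge fun hle ↦ by
      have := hY.antitone_rowLen hle
      omega
    have := hY.antitone_rowLen hlt.le
    exact ⟨i', hlt, by omega⟩
  · rintro ⟨i', hlt, heq⟩
    let p : Fin m := ⟨i - 1, by omega⟩
    have hp : rowLen m N Y p = rowLen m N Y i := le_antisymm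
      ((hY.antitone_rowLen (Fin.le_def.2 (Nat.le_sub_one_of_lt hlt))).trans_eq heq)
      (hY.antitone_rowLen (Fin.le_def.2 (Nat.sub_le _ _)))
    exact ⟨p, by simp only [hp, p]; omega⟩

theorem IsOrderFilter.sub_one_mem_ISet_iff (hY : IsOrderFilter Y) (i : Fin m) :
    (rowLen m N Y i : ℤ) + m - i - 1 ∈ ISet m N Y ↔ ∃ i' > i, rowLen m N Y i' = rowLen m N Y i := by
  constructor
  · rintro ⟨i', hi'⟩
    have hlt : i < i' := lt_of_not_ge fun hle ↦ by
      have := hY.antitone_rowLen hle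
      omega
    have := hY.antitone_rowLen hlt.le
    exact ⟨i', hlt, by omega⟩
  · rintro ⟨i', hlt, heq⟩
    let s : Fin m := ⟨i + 1, by omega⟩
    have hs : rowLen m N Y s = rowLen m N Y i := le_antisymm
      (hY.antitone_rowLen (Fin.le_def.2 (Nat.le_succ _)))
      (heq.symm.trans_le (hY.antitone_rowLen (Fin.le_def.2 hlt)))
    exact ⟨s, by simp only [hs, s]; omega⟩

theorem IsOrderFilter.exists_maximal_notMem_ykappa_eq_iff (hY : IsOrderFilter Y) {k : ℤ}
    (hk : k < m + N) :
    (∃ x, Maximal (· ∉ Y) x ∧ ykappa m N x = k) ↔ k ∈ ISet m N Y ∧ k + 1 ∉ ISet m N Y := by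
  constructor
  · rintro ⟨⟨i, j⟩, hmax, rfl⟩
    induction i using OrderDual.rec with | _ i
    induction j using OrderDual.rec with | _ j
    obtain ⟨hj, hne⟩ := (hY.maximal_notMem_iff i j).1 hmax
    have hk' : ykappa m N (toDual i, toDual j) = rowLen m N Y i + m - i := by
      simp only [ykappa, ofDual_toDual]
      omega
    rw [hk', hY.add_one_mem_ISet_iff]
    exact ⟨⟨i, rfl⟩, fun ⟨i', hlt, heq⟩ ↦ hne i' hlt heq⟩
  · rintro ⟨⟨i, rfl⟩, hi⟩
    rw [hY.add_one_mem_ISet_iff] at hi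
    push Not at hi
    have hlt : rowLen m N Y i < N := by
      refine (rowLen_le Y i).lt_of_ne fun hfull ↦ ?_
      let top : Fin m := ⟨0, i.pos⟩
      have htop : rowLen m N Y top = rowLen m N Y i :=
        ((rowLen_le Y top).trans_eq hfull.symm).antisymm
          (hY.antitone_rowLen (Fin.le_def.2 (Nat.zero_le _)))
      exact hi top (Fin.lt_def.2 (show 0 < (i : ℕ) by omega)) htop
    refine ⟨(toDual i, toDual ⟨_, hlt⟩), (hY.maximal_notMem_iff _ _).2 ⟨rfl, hi⟩, ?_⟩
    simp only [ykappa, ofDual_toDual]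
    omega

theorem IsOrderFilter.exists_minimal_mem_ykappa_eq_iff (hY : IsOrderFilter Y) {k : ℤ}
    (hk : 1 ≤ k) :
    (∃ x, Minimal (· ∈ Y) x ∧ ykappa m N x = k) ↔ k + 1 ∈ ISet m N Y ∧ k ∉ ISet m N Y := by
  constructor
  · rintro ⟨⟨i, j⟩, hmin, rfl⟩
    induction i using OrderDual.rec with | _ i
    induction j using OrderDual.rec with | _ j
    obtain ⟨hj, hne⟩ := (hY.minimal_mem_iff i j).1 hmin
    have hk' : ykappa m N (toDual i, toDual j) = rowLen m N Y i + m - i - 1 := by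
      simp only [ykappa, ofDual_toDual]
      omega
    rw [hk', hY.sub_one_mem_ISet_iff, sub_add_cancel]
    exact ⟨⟨i, rfl⟩, fun ⟨i', hlt, heq⟩ ↦ hne i' hlt heq⟩
  · rintro ⟨⟨i, hki⟩, hi⟩
    rw [eq_sub_of_add_eq hki, hY.sub_one_mem_ISet_iff] at hi
    push Not at hi
    have hpos : 0 < rowLen m N Y i := by
      refine Nat.pos_of_ne_zero fun hempty ↦ ?_
      let bot : Fin m := ⟨m - 1, by omega⟩
      have hle : i ≤ bot := Fin.le_def.2 (Nat.le_sub_one_of_lt i.2)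
      have hbot : rowLen m N Y bot = rowLen m N Y i := by
        have := hY.antitone_rowLen hle
        omega
      exact hi bot (Fin.lt_def.2 (show (i : ℕ) < m - 1 by omega)) hbot
    have hN := rowLen_le Y i
    let j : Fin N := ⟨rowLen m N Y i - 1, by omega⟩
    have hj : (j : ℕ) + 1 = rowLen m N Y i := Nat.sub_add_cancel hpos
    refine ⟨(toDual i, toDual j), (hY.minimal_mem_iff _ _).2 ⟨hj, hi⟩, ?_⟩
    simp only [ykappa, ofDual_toDual]
    omega

end YoungDiagram

theorem ISet_iff_Sop_eq_general (m N : ℕ) (Y : Set (YD m N)) (hY : IsOrderFilter Y)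
    (k : ℤ) (hk1 : 1 ≤ k) (hk : k < m + N) :
    ((k ∈ ISet m N Y ∧ k + 1 ∈ ISet m N Y) ∨ (k ∉ ISet m N Y ∧ k + 1 ∉ ISet m N Y)) ↔
      Sop (ykappa m N) k Y = Y := by
  rw [(isProperColoring_ykappa m N).Sop_eq_self_iff hY,
    hY.exists_maximal_notMem_ykappa_eq_iff hk, hY.exists_minimal_mem_ykappa_eq_iff hk1]
  tauto

/-- For an order filter `Y` of `Y_{m,n−m+1}` and `k ∈ {1,…,n}`:
(`k ∈ 𝓘(Y)` and `k+1 ∈ 𝓘(Y)`) or (`k ∉ 𝓘(Y)` and `k+1 ∉ 𝓘(Y)`)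
if and only if `S_k(Y) = Y`. -/
theorem ISet_iff_Sop_eq (n m : ℕ) (hm : 1 ≤ m) (hmn : 2 * m ≤ n + 1)
    (Y : Set (YD m (n - m + 1))) (hY : IsOrderFilter Y)
    (k : ℤ) (hk1 : 1 ≤ k) (hkn : k ≤ n) :
    ((k ∈ ISet m (n - m + 1) Y ∧ k + 1 ∈ ISet m (n - m + 1) Y) ∨
        (k ∉ ISet m (n - m + 1) Y ∧ k + 1 ∉ ISet m (n - m + 1) Y)) ↔
      Sop (ykappa m (n - m + 1)) k Y = Y :=
  ISet_iff_Sop_eq_general m (n - m + 1) Y hY k hk1 (by omega)
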